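/- Let n ≥ 1 and k = (k_1,...,k_n) ∈ ℤ^n. Then the sum of the signs of all generalized Gelfand-Tsetlin patterns of order n with bottom row a_{n,j} = k_j (j = 1,...,n), multiplied by ∏_{1 ≤ i < j ≤ n} (j − i), equals ∏_{1 ≤ i < j ≤ n} (k_j − k_i + j − i). -/

import Mathlib

/-- A generalized Gelfand-Tsetlin pattern of order `n`: a triangular array
`(a_{i,j})_{1 ≤ j ≤ i ≤ n}` (row `i : Fin n` has `i + 1` entries) such that for every
entry `a_{i,j}` with `i ≤ n - 1`: if `a_{i+1,j} ≤ a_{i+1,j+1}` then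
`a_{i+1,j} ≤ a_{i,j} ≤ a_{i+1,j+1}`, and if `a_{i+1,j} > a_{i+1,j+1}` then
`a_{i+1,j} > a_{i,j} > a_{i+1,j+1}`. -/
def IsGenGT {n : ℕ} (a : ∀ i : Fin n, Fin (i.1 + 1) → ℤ) : Prop :=
  ∀ i : Fin n, ∀ hi : i.1 + 1 < n, ∀ j : Fin (i.1 + 1),
    if a ⟨i.1 + 1, hi⟩ ⟨j.1, by have := j.isLt; show j.1 < i.1 + 1 + 1; omega⟩ ≤
        a ⟨i.1 + 1, hi⟩ ⟨j.1 + 1, by have := j.isLt; show j.1 + 1 < i.1 + 1 + 1; omega⟩ then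
      a ⟨i.1 + 1, hi⟩ ⟨j.1, by have := j.isLt; show j.1 < i.1 + 1 + 1; omega⟩ ≤ a i j ∧
        a i j ≤ a ⟨i.1 + 1, hi⟩ ⟨j.1 + 1, by have := j.isLt; show j.1 + 1 < i.1 + 1 + 1; omega⟩
    else
      a ⟨i.1 + 1, hi⟩ ⟨j.1 + 1, by have := j.isLt; show j.1 + 1 < i.1 + 1 + 1; omega⟩ < a i j ∧
        a i j < a ⟨i.1 + 1, hi⟩ ⟨j.1, by have := j.isLt; show j.1 < i.1 + 1 + 1; omega⟩

/-- The number of inversions of a generalized Gelfand-Tsetlin pattern: entries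
`a_{i,j}` with `a_{i+1,j} > a_{i+1,j+1}`. -/
noncomputable def genGTInvCount {n : ℕ} (a : ∀ i : Fin n, Fin (i.1 + 1) → ℤ) : ℕ :=
  ∑ i : Fin n,
    if hi : i.1 + 1 < n then
      (Finset.univ.filter (fun j : Fin (i.1 + 1) =>
        a ⟨i.1 + 1, hi⟩ ⟨j.1 + 1, by have := j.isLt; show j.1 + 1 < i.1 + 1 + 1; omega⟩ <
          a ⟨i.1 + 1, hi⟩ ⟨j.1, by have := j.isLt; show j.1 < i.1 + 1 + 1; omega⟩)).card
    else 0

/-- The bottom row (row `n`) of a triangular array equals `k`. -/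
def BottomRow {n : ℕ} (a : ∀ i : Fin n, Fin (i.1 + 1) → ℤ) (k : Fin n → ℤ) : Prop :=
  ∀ i : Fin n, i.1 + 1 = n → ∀ j : Fin (i.1 + 1),
    a i j = k ⟨j.1, by have := j.isLt; omega⟩

/-- The signed enumeration of all generalized Gelfand-Tsetlin patterns of order `n`
with bottom row `k`, each pattern counted with sign `(-1) ^ (number of inversions)`. -/
noncomputable def LgenGT (n : ℕ) (k : Fin n → ℤ) : ℤ :=
  ∑ᶠ a ∈ {a : ∀ i : Fin n, Fin (i.1 + 1) → ℤ | IsGenGT a ∧ BottomRow a k},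
    (-1 : ℤ) ^ genGTInvCount a

/-- The range of the `j`-th entry of the row above `k`. -/
noncomputable def gtRange {n : ℕ} (k : Fin (n + 1) → ℤ) (j : Fin n) : Finset ℤ :=
  if k j.castSucc ≤ k j.succ then Finset.Icc (k j.castSucc) (k j.succ)
  else Finset.Ioo (k j.succ) (k j.castSucc)

/-- The sign of the `j`-th entry of the row above `k`. -/
noncomputable def gtSign {n : ℕ} (k : Fin (n + 1) → ℤ) (j : Fin n) : ℤ :=
  if k j.succ < k j.castSucc then -1 else 1

/-- Append a bottom row. -/
def gtSnoc {n : ℕ} (a : ∀ i : Fin n, Fin (i.1 + 1) → ℤ) (k : Fin (n + 1) → ℤ) :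
    ∀ i : Fin (n + 1), Fin (i.1 + 1) → ℤ :=
  Fin.snoc (α := fun i : Fin (n + 1) => Fin (i.1 + 1) → ℤ) a k

theorem gtSnoc_castSucc {n : ℕ} (a : ∀ i : Fin n, Fin (i.1 + 1) → ℤ) (k : Fin (n + 1) → ℤ)
    (i : Fin n) : gtSnoc a k i.castSucc = a i :=
  Fin.snoc_castSucc (α := fun i : Fin (n + 1) => Fin (i.1 + 1) → ℤ) k a i

theorem gtSnoc_last {n : ℕ} (a : ∀ i : Fin n, Fin (i.1 + 1) → ℤ) (k : Fin (n + 1) → ℤ) :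
    gtSnoc a k (Fin.last n) = k :=
  Fin.snoc_last (α := fun i : Fin (n + 1) => Fin (i.1 + 1) → ℤ) k a

theorem gtSnoc_lt {n : ℕ} (a : ∀ i : Fin n, Fin (i.1 + 1) → ℤ) (k : Fin (n + 1) → ℤ)
    (i : ℕ) (h : i < n + 1) (h' : i < n) : gtSnoc a k ⟨i, h⟩ = a ⟨i, h'⟩ :=
  gtSnoc_castSucc a k ⟨i, h'⟩

theorem gtSnoc_mk_last {n : ℕ} (a : ∀ i : Fin n, Fin (i.1 + 1) → ℤ) (k : Fin (n + 1) → ℤ)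
    (h : n < n + 1) : gtSnoc a k ⟨n, h⟩ = k :=
  gtSnoc_last a k

theorem gt_bottom_iff {n : ℕ} (b : ∀ i : Fin (n + 1), Fin (i.1 + 1) → ℤ) (k : Fin (n + 1) → ℤ) :
    BottomRow b k ↔ b (Fin.last n) = k := by
  constructor
  · intro h
    funext j
    exact h (Fin.last n) rfl j
  · rintro h i hi j
    obtain rfl : i = Fin.last n := Fin.ext (by simpa using hi)
    exact congrFun h j

theorem gt_bottom_snoc {n : ℕ} (a : ∀ i : Fin n, Fin (i.1 + 1) → ℤ) (k : Fin (n + 1) → ℤ) :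
    BottomRow (gtSnoc a k) k := (gt_bottom_iff _ _).2 (gtSnoc_last a k)

theorem gt_exists_bottom {n : ℕ} (a : ∀ i : Fin n, Fin (i.1 + 1) → ℤ) :
    ∃ l, BottomRow a l := by
  cases n with
  | zero => exact ⟨fun _ => 0, fun i => i.elim0⟩
  | succ m => exact ⟨a (Fin.last m), (gt_bottom_iff _ _).2 rfl⟩

theorem gt_bottom_unique {n : ℕ} (a : ∀ i : Fin n, Fin (i.1 + 1) → ℤ) (l l' : Fin n → ℤ)
    (h : BottomRow a l) (h' : BottomRow a l') : l = l' := by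
  cases n with
  | zero => exact Subsingleton.elim _ _
  | succ m => rw [← (gt_bottom_iff _ _).1 h, ← (gt_bottom_iff _ _).1 h']

theorem gt_isGen_snoc {n : ℕ} (a : ∀ i : Fin n, Fin (i.1 + 1) → ℤ) (k : Fin (n + 1) → ℤ)
    (l : Fin n → ℤ) (h : BottomRow a l) :
    IsGenGT (gtSnoc a k) ↔ IsGenGT a ∧ ∀ j, l j ∈ gtRange k j := by
  cases n with
  | zero =>
    constructor
    · intro _
      exact ⟨fun i => i.elim0, fun j => j.elim0⟩
    · intro _ i hi
      omega
  | succ m =>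
    obtain rfl := (gt_bottom_iff _ _).1 h
    have key : ∀ j : Fin (m + 1), a (Fin.last m) j ∈ gtRange k j ↔
        if k j.castSucc ≤ k j.succ then k j.castSucc ≤ a (Fin.last m) j ∧
          a (Fin.last m) j ≤ k j.succ
        else k j.succ < a (Fin.last m) j ∧ a (Fin.last m) j < k j.castSucc := by
      intro j
      unfold gtRange
      split_ifs <;> simp
    constructor
    · intro H
      refine ⟨?_, ?_⟩
      · intro i hi j
        have := H i.castSucc (by simpa using by omega) j
        rw [gtSnoc_castSucc, gtSnoc_lt a k _ _ (by simpa using hi)] at this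
        exact this
      · intro j
        rw [key]
        have := H (Fin.last m).castSucc (by simp) j
        rw [gtSnoc_castSucc] at this
        have e : ∀ h, gtSnoc a k ⟨(Fin.last m).castSucc.1 + 1, h⟩ = k := fun h => gtSnoc_last a k
        rw [e] at this
        exact this
    · rintro ⟨H1, H2⟩ i
      refine Fin.lastCases ?_ ?_ i
      · intro hi
        simp at hi
      · intro i
        refine Fin.lastCases ?_ ?_ i
        · intro hi j
          rw [gtSnoc_castSucc]
          have e : ∀ h, gtSnoc a k ⟨(Fin.last m).castSucc.1 + 1, h⟩ = k :=
            fun h => gtSnoc_last a k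
          rw [e]
          exact (key j).1 (H2 j)
        · intro i hi j
          rw [gtSnoc_castSucc, gtSnoc_lt a k _ _ (by simp)]
          exact H1 i.castSucc (by simp) j

theorem gt_inv_snoc {n : ℕ} (a : ∀ i : Fin n, Fin (i.1 + 1) → ℤ) (k : Fin (n + 1) → ℤ) :
    (-1 : ℤ) ^ genGTInvCount (gtSnoc a k) = (∏ j, gtSign k j) * (-1) ^ genGTInvCount a := by
  have hs : ∏ j, gtSign k j = (-1) ^ (Finset.univ.filter
      (fun j : Fin n => k j.succ < k j.castSucc)).card := by
    simp [gtSign, Finset.prod_ite]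
  rw [hs, ← pow_add]
  congr 1
  cases n with
  | zero =>
    simp [genGTInvCount]
  | succ m =>
    unfold genGTInvCount
    rw [Fin.sum_univ_castSucc, Fin.sum_univ_castSucc, Fin.sum_univ_castSucc]
    have e : ∀ h, gtSnoc a k ⟨(Fin.last m).castSucc.1 + 1, h⟩ = k := fun h => gtSnoc_last a k
    have e2 : ∀ (i : Fin m) (h), gtSnoc a k ⟨i.castSucc.castSucc.1 + 1, h⟩ =
      a ⟨i.castSucc.1 + 1, by simp⟩ := fun i h => gtSnoc_lt a k _ _ _
    rw [dif_neg (by simp : ¬ ((Fin.last (m+1)).1 + 1 < m + 1 + 1)),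
      dif_neg (by simp : ¬ ((Fin.last m).1 + 1 < m + 1)),
      dif_pos (by simp : ((Fin.last m).castSucc.1 + 1 < m + 1 + 1)), add_zero, add_zero, add_comm]
    congr 1
    · simp only [e]
      rfl
    · refine Finset.sum_congr rfl fun i _ => ?_
      rw [dif_pos (by simp), dif_pos (by simp)]
      simp only [e2]
      rfl

theorem gt_telescope (f F : ℤ → ℤ) (hF : ∀ x, F (x + 1) = F x + f x) (a : ℤ) (m : ℕ) :
    ∑ x ∈ Finset.Ico a (a + m), f x = F (a + m) - F a := by
  induction m with
  | zero => simp
  | succ m ih =>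
    have : Finset.Ico a (a + (m + 1 : ℕ)) = insert (a + m) (Finset.Ico a (a + m)) := by
      ext x; simp; omega
    rw [this, Finset.sum_insert (by simp), ih]
    have := hF (a + m)
    push_cast
    rw [← add_assoc, this]
    ring

theorem gt_telescope' (f F : ℤ → ℤ) (hF : ∀ x, F (x + 1) = F x + f x) (a b : ℤ) (h : a ≤ b) :
    ∑ x ∈ Finset.Ico a b, f x = F b - F a := by
  have := gt_telescope f F hF a (b - a).toNat
  have e : a + ((b - a).toNat : ℤ) = b := by omega
  rwa [e] at this

theorem gt_range_sum {n : ℕ} (k : Fin (n + 1) → ℤ) (j : Fin n) (f F : ℤ → ℤ)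
    (hF : ∀ x, F (x + 1) = F x + f x) :
    ∑ x ∈ gtRange k j, gtSign k j * f x = F (k j.succ + 1) - F (k j.castSucc) := by
  unfold gtRange gtSign
  split_ifs with h1 h2 h2
  · omega
  · have : Finset.Icc (k j.castSucc) (k j.succ) = Finset.Ico (k j.castSucc) (k j.succ + 1) := by
      ext x; simp
    simp only [one_mul]
    rw [this, gt_telescope' f F hF _ _ (by omega)]
  · have : Finset.Ioo (k j.succ) (k j.castSucc) = Finset.Ico (k j.succ + 1) (k j.castSucc) := by
      ext x; simp
    rw [← Finset.mul_sum, this, gt_telescope' f F hF _ _ (by omega)]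
    ring
  · omega

/-- The binomial determinant. -/
noncomputable def gtMat (n : ℕ) (k : Fin n → ℤ) : Matrix (Fin n) (Fin n) ℤ :=
  Matrix.of fun i j => Ring.choose (k i + (i.1 : ℤ)) j.1

theorem gt_det_succ {n : ℕ} (k : Fin (n + 1) → ℤ) :
    (gtMat (n + 1) k).det = (Matrix.of fun i j : Fin n =>
      Ring.choose (k i.succ + 1 + (i.1 : ℤ)) (j.1 + 1) -
        Ring.choose (k i.castSucc + (i.1 : ℤ)) (j.1 + 1)).det := by
  rw [Matrix.det_eq_of_forall_row_eq_smul_add_pred (A := gtMat (n + 1) k)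
    (B := Matrix.of (Fin.cases (gtMat (n + 1) k 0)
      (fun i j => gtMat (n + 1) k i.succ j - gtMat (n + 1) k i.castSucc j)))
    (fun _ => 1) (by simp) (by simp)]
  rw [Matrix.det_succ_column_zero, Fin.sum_univ_succ, Finset.sum_eq_zero]
  · have h0 : gtMat (n + 1) k 0 0 = 1 := by simp [gtMat]
    simp only [Matrix.of_apply, Fin.cases_zero, h0]
    simp only [Fin.val_zero, pow_zero, one_mul, add_zero]
    congr 1
    ext i j
    simp [gtMat]
    congr 1
    ring
  · intro i _
    simp [gtMat]

theorem gt_det_rec {n : ℕ} (k : Fin (n + 1) → ℤ) :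
    ∑ l ∈ Fintype.piFinset (gtRange k), (∏ j, gtSign k j) * (gtMat n l).det =
      (gtMat (n + 1) k).det := by
  rw [gt_det_succ]
  have h := (Matrix.detRowAlternating (R := ℤ) (n := Fin n)).toMultilinearMap.map_sum_finset
    (fun (i : Fin n) (x : ℤ) => gtSign k i • (fun j : Fin n => Ring.choose (x + (i.1 : ℤ)) j.1))
    (gtRange k)
  have h2 : ∀ l : Fin n → ℤ, (∏ j, gtSign k j) * (gtMat n l).det =
      (Matrix.detRowAlternating (R := ℤ) (n := Fin n)).toMultilinearMap
        (fun i => gtSign k i • (fun j : Fin n => Ring.choose (l i + (i.1 : ℤ)) j.1)) := by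
    intro l
    rw [MultilinearMap.map_smul_univ]
    rfl
  rw [Finset.sum_congr rfl (fun l _ => h2 l), ← h]
  change Matrix.det _ = _
  congr 1
  funext i j
  rw [Finset.sum_apply]
  simp only [Pi.smul_apply, smul_eq_mul, Matrix.of_apply]
  exact gt_range_sum k i (fun x => Ring.choose (x + (i.1 : ℤ)) j.1)
    (fun x => Ring.choose (x + (i.1 : ℤ)) (j.1 + 1)) (fun x => by
      have := Ring.choose_succ_succ (x + (i.1 : ℤ)) j.1
      rw [show x + 1 + (i.1 : ℤ) = x + (i.1 : ℤ) + 1 by ring, this, add_comm])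

theorem gt_main (n : ℕ) : ∀ k : Fin n → ℤ,
    ∃ P : Finset (∀ i : Fin n, Fin (i.1 + 1) → ℤ), (∀ a, a ∈ P ↔ IsGenGT a ∧ BottomRow a k) ∧
      ∑ a ∈ P, (-1 : ℤ) ^ genGTInvCount a = (gtMat n k).det := by
  classical
  induction n with
  | zero =>
    intro k
    refine ⟨Finset.univ, fun a => ?_, ?_⟩
    · simp only [Finset.mem_univ, true_iff]
      exact ⟨fun i => i.elim0, fun i => i.elim0⟩
    · simp [genGTInvCount]
  | succ n ih =>
    intro k
    choose P hP hS using ih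
    refine ⟨((Fintype.piFinset (gtRange k)).biUnion P).image (fun a => gtSnoc a k), ?_, ?_⟩
    · intro b
      simp only [Finset.mem_image, Finset.mem_biUnion, Fintype.mem_piFinset]
      constructor
      · rintro ⟨a, ⟨l, hl, ha⟩, rfl⟩
        have ha := (hP l a).1 ha
        exact ⟨(gt_isGen_snoc a k l ha.2).2 ⟨ha.1, hl⟩, gt_bottom_snoc a k⟩
      · rintro ⟨h1, h2⟩
        have hb : gtSnoc (fun i : Fin n => b i.castSucc) k = b := by
          funext i
          refine Fin.lastCases ?_ ?_ i
          · rw [gtSnoc_last, (gt_bottom_iff _ _).1 h2]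
          · intro i
            rw [gtSnoc_castSucc]
        obtain ⟨l, hl⟩ := gt_exists_bottom (fun i : Fin n => b i.castSucc)
        rw [← hb, gt_isGen_snoc _ k l hl] at h1
        exact ⟨_, ⟨l, h1.2, (hP l _).2 ⟨h1.1, hl⟩⟩, hb⟩
    · rw [Finset.sum_image, Finset.sum_biUnion, ← gt_det_rec]
      · refine Finset.sum_congr rfl fun l _ => ?_
        rw [← hS, Finset.mul_sum]
        exact Finset.sum_congr rfl fun a _ => gt_inv_snoc a k
      · intro l _ l' _ hne
        refine Finset.disjoint_left.2 fun a ha ha' => hne ?_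
        exact gt_bottom_unique a l l' ((hP l a).1 ha).2 ((hP l' a).1 ha').2
      · intro a _ a' _ h
        funext i
        have := congrFun h i.castSucc
        simp only at this
        rwa [gtSnoc_castSucc, gtSnoc_castSucc] at this

theorem gt_L_eq (n : ℕ) (k : Fin n → ℤ) : LgenGT n k = (gtMat n k).det := by
  obtain ⟨P, hP, hS⟩ := gt_main n k
  have : {a : ∀ i : Fin n, Fin (i.1 + 1) → ℤ | IsGenGT a ∧ BottomRow a k} = ↑P := by
    ext a
    exact (hP a).symm
  rw [LgenGT, this, finsum_mem_coe_finset, hS]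

theorem gt_vandermonde (n : ℕ) (k : Fin n → ℤ) :
    (Matrix.vandermonde fun i => k i + (i.1 : ℤ)).det =
      (∏ j : Fin n, (j.1.factorial : ℤ)) * (gtMat n k).det := by
  rw [Matrix.det_eval_matrixOfPolynomials_eq_det_vandermonde _ (fun i => descPochhammer ℤ i)
      (fun i => descPochhammer_natDegree ℤ i) (fun i => monic_descPochhammer ℤ i),
    ← Matrix.det_mul_row]
  congr 1
  ext i j
  have := Ring.descPochhammer_eq_factorial_smul_choose (k i + (i.1 : ℤ)) j.1
  simp only [Matrix.of_apply, gtMat]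
  rw [nsmul_eq_mul] at this
  rw [← this, Polynomial.eval_eq_smeval]

theorem gt_prod_swap (n : ℕ) (f : Fin n → Fin n → ℤ) :
    ∏ q : Fin n, ∏ p ∈ Finset.Iio q, f p q = ∏ p : Fin n, ∏ q ∈ Finset.Ioi p, f p q :=
  Finset.prod_comm' (by simp)

/-- The signed enumeration of generalized Gelfand-Tsetlin patterns with bottom row `k`
satisfies `L_n(k) · ∏_{1 ≤ i < j ≤ n} (j - i) = ∏_{1 ≤ i < j ≤ n} (k_j - k_i + j - i)`. -/
theorem gen_gt_pattern_signed_enumeration (n : ℕ) (hn : 1 ≤ n) (k : Fin n → ℤ) :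
    LgenGT n k * ∏ q : Fin n, ∏ p ∈ Finset.Iio q, ((q.1 : ℤ) - (p.1 : ℤ)) =
      ∏ q : Fin n, ∏ p ∈ Finset.Iio q, (k q - k p + ((q.1 : ℤ) - (p.1 : ℤ))) := by
  obtain ⟨m, rfl⟩ : ∃ m, n = m + 1 := ⟨n - 1, by omega⟩
  have h1 := gt_vandermonde (m + 1) k
  have h2 := Matrix.det_vandermonde_id_eq_superFactorial (R := ℤ) m
  rw [Matrix.det_vandermonde] at h1 h2
  rw [gt_prod_swap (m + 1) (fun p q => (q.1 : ℤ) - (p.1 : ℤ)),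
    gt_prod_swap (m + 1) (fun p q => k q - k p + ((q.1 : ℤ) - (p.1 : ℤ))), gt_L_eq]
  have h3 : ∏ j : Fin (m + 1), (j.1.factorial : ℤ) = m.superFactorial := by
    rw [Fin.prod_univ_eq_prod_range (fun j => (j.factorial : ℤ)), ← Nat.prod_range_succ_factorial]
    push_cast
    rfl
  rw [h3, mul_comm, ← h2] at h1
  refine h1.symm.trans ?_
  refine Finset.prod_congr rfl fun p _ => Finset.prod_congr rfl fun q _ => ?_
  ring
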